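/- For all n ≥ 2, the following identity holds in ℤ[x]: Σ_{k≥0} (r_n^{(k−1)} − r_n^{(k)}) x^k = Σ_{k=0}^{n−2} (x^{k+2} − 1) · P_n^{(k)}(x), where r_n^{(k)} is the number of Dyck paths of semilength n having rank k (with r_n^{(−1)} = 0). -/

import Mathlib

/-!
The left side is `(X - 1) * R`, where `R = ∑ X ^ rank P` over all Dyck paths `P` of
semilength `n`, so by the geometric sum it suffices to show
`R = ∑ k, (1 + X + ⋯ + X ^ (k + 1)) * Pnk n k`.

Every nonempty Dyck path is uniquely `t U D^(j+1)`; removing its last peak gives its *father*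
`t D^j`, whose area is smaller by `2 j + 1` (`isDyck_peak_iff`, `area_peak`). Conversely, a father
of semilength `n - 1 ≥ 1` with last descent of length `k + 1` has exactly `k + 2` sons, one for
each height `0 ≤ j ≤ k + 1` at which a peak can be inserted, and the son at height `j` exceeds the
son at height `0` in rank by `j`. The son at height `0` is precisely a path ending in
`U D^(k+1) U D`, so grouping the paths of semilength `n` by father gives the formula for `R`
(`sum_dyck_eq`). The same recursion shows that `area P = n + 2 r` for some natural number
`r ≤ n²`, so that the truncated sums in the statement lose nothing (`exists_rank`).
-/

/-- A Dyck path is a list of steps in `{+1, -1}` whose partial sums (heights)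
are all nonnegative and whose total sum is `0`. -/
def IsDyck (s : List ℤ) : Prop :=
  (∀ x ∈ s, x = 1 ∨ x = -1) ∧ (∀ i : ℕ, 0 ≤ (s.take i).sum) ∧ s.sum = 0

/-- The area of a path: the sum of all heights `h_0, …, h_{length}`. -/
def area (s : List ℤ) : ℤ :=
  ∑ i ∈ Finset.range (s.length + 1), (s.take i).sum

/-- The length of the last descent, i.e. of the final maximal run of `-1` steps. -/
def lastDescentLen (s : List ℤ) : ℕ :=
  (s.reverse.takeWhile (fun x => x == (-1 : ℤ))).length

/-- The son of a path `s` at height `j`: insert a peak `+1, -1` immediately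
after position `length - j`. -/
def son (s : List ℤ) (j : ℕ) : List ℤ :=
  s.take (s.length - j) ++ [1, -1] ++ s.drop (s.length - j)

/-- `endsUDkUD s k` says the final `k + 3` steps of `s` are
`+1`, followed by `k + 1` copies of `-1`, followed by `+1, -1`
(i.e. `s` ends with `U D^{k+1} U D`). -/
def endsUDkUD (s : List ℤ) (k : ℕ) : Prop :=
  ∃ t : List ℤ, s = t ++ (1 :: (List.replicate (k + 1) (-1) ++ [1, -1]))

/-- The polynomial `P_n^{(k)}(x) = Σ_P x^{rank P}`, the sum being over all Dyck
paths `P` of semilength `n` ending with `U D^{k+1} U D`; the coefficient of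
`x^i` is the number of such paths of rank `i`, i.e. of area `n + 2i`
(all ranks are at most `n(n-1)/2 ≤ n²`, so the range below is exhaustive). -/
noncomputable def Pnk (n k : ℕ) : Polynomial ℤ :=
  ∑ i ∈ Finset.range (n * n + 1),
    Polynomial.C ((Nat.card {P : List ℤ // IsDyck P ∧ P.length = 2 * n ∧
      endsUDkUD P k ∧ area P = (n : ℤ) + 2 * i}) : ℤ) * Polynomial.X ^ i

/-- `r_n^{(k)}`: the number of Dyck paths of semilength `n` having rank `k`
(i.e. area `n + 2k`). -/
noncomputable def rnk (n k : ℕ) : ℕ :=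
  Nat.card {P : List ℤ // IsDyck P ∧ P.length = 2 * n ∧ area P = (n : ℤ) + 2 * k}

/-! ### Dyck paths and their last descent -/

/-- `t` is an initial segment of a Dyck path and ends at height `j`. -/
def IsDyckStart (t : List ℤ) (j : ℕ) : Prop :=
  (∀ x ∈ t, x = 1 ∨ x = -1) ∧ (∀ i : ℕ, 0 ≤ (t.take i).sum) ∧ t.sum = j

lemma nonneg_append_iff (a b : List ℤ) :
    (∀ i : ℕ, 0 ≤ ((a ++ b).take i).sum) ↔
      (∀ i : ℕ, 0 ≤ (a.take i).sum) ∧ ∀ i : ℕ, 0 ≤ a.sum + (b.take i).sum := by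
  constructor
  · intro h
    refine ⟨fun i => ?_, fun i => ?_⟩
    · have := h (min i a.length)
      rw [List.take_append_of_le_length (min_le_right _ _)] at this
      rcases le_total i a.length with hi | hi
      · rwa [min_eq_left hi] at this
      · rw [min_eq_right hi] at this
        rwa [List.take_of_length_le hi, ← List.take_length (l := a)]
    · have := h (a.length + i)
      rwa [List.take_length_add_append, List.sum_append] at this
  · rintro ⟨h1, h2⟩ i
    rcases le_total i a.length with hi | hi
    · rw [List.take_append_of_le_length hi]
      exact h1 i
    · obtain ⟨m, rfl⟩ := Nat.exists_eq_add_of_le hi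
      rw [List.take_length_add_append, List.sum_append]
      exact h2 m

lemma isDyck_descent_iff (t : List ℤ) (j : ℕ) :
    IsDyck (t ++ List.replicate j (-1)) ↔ IsDyckStart t j := by
  unfold IsDyck IsDyckStart
  rw [nonneg_append_iff]
  simp only [List.mem_append, List.take_replicate, List.sum_replicate, List.sum_append,
    List.mem_replicate, smul_neg, nsmul_eq_mul, mul_one]
  constructor
  · rintro ⟨h1, ⟨h2, _⟩, h4⟩
    exact ⟨fun x hx => h1 x (Or.inl hx), h2, by linarith⟩
  · rintro ⟨h1, h2, h3⟩
    refine ⟨?_, ⟨h2, fun i => ?_⟩, by linarith⟩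
    · rintro x (hx | hx)
      · exact h1 x hx
      · exact Or.inr hx.2
    · have : min i j ≤ j := min_le_right _ _
      omega

lemma isDyckStart_up_iff (t : List ℤ) (j : ℕ) :
    IsDyckStart (t ++ [1]) (j + 1) ↔ IsDyckStart t j := by
  unfold IsDyckStart
  rw [nonneg_append_iff]
  simp only [List.mem_append, List.sum_append, List.mem_singleton, List.sum_singleton]
  constructor
  · rintro ⟨h1, ⟨h2, _⟩, h4⟩
    exact ⟨fun x hx => h1 x (Or.inl hx), h2, by push_cast at h4; linarith⟩
  · rintro ⟨h1, h2, h3⟩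
    refine ⟨?_, ⟨h2, fun i => ?_⟩, by push_cast; linarith⟩
    · rintro x (hx | hx)
      · exact h1 x hx
      · exact Or.inl hx
    · rcases i with _ | i <;> simp <;> omega

/-- Inserting a peak `U D` in the last descent preserves and reflects being a Dyck path. -/
lemma isDyck_peak_iff (t : List ℤ) (j : ℕ) :
    IsDyck (t ++ 1 :: List.replicate (j + 1) (-1)) ↔ IsDyckStart t j := by
  rw [← isDyckStart_up_iff, ← isDyck_descent_iff]
  simp

lemma exists_last_descent (l : List ℤ) (h : ∀ x ∈ l, x = 1 ∨ x = -1) :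
    (∃ a, l = List.replicate a (-1)) ∨ ∃ t a, l = t ++ 1 :: List.replicate a (-1) := by
  induction l using List.reverseRecOn with
  | nil => exact Or.inl ⟨0, rfl⟩
  | append_singleton l x ih =>
    rcases h x (by simp) with rfl | rfl
    · exact Or.inr ⟨l, 0, by simp⟩
    · rcases ih (fun y hy => h y (by simp [hy])) with ⟨a, rfl⟩ | ⟨t, a, rfl⟩
      · exact Or.inl ⟨a + 1, by rw [List.replicate_succ']⟩
      · exact Or.inr ⟨t, a + 1, by rw [List.replicate_succ']; simp⟩

lemma exists_last_peak {s : List ℤ} (hs : IsDyck s) (hne : s ≠ []) :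
    ∃ t j, s = t ++ 1 :: List.replicate (j + 1) (-1) := by
  rcases exists_last_descent s hs.1 with ⟨a, rfl⟩ | ⟨t, a, rfl⟩
  · have := hs.2.2
    simp only [List.sum_replicate, smul_neg, nsmul_eq_mul, mul_one, neg_eq_zero,
      Nat.cast_eq_zero] at this
    subst this
    simp at hne
  · rcases a with _ | j
    · -- a Dyck path cannot end with an up step
      exfalso
      have h1 := ((nonneg_append_iff _ _).1 hs.2.1).2 0
      have h2 := hs.2.2
      simp at h1 h2
      omega
    · exact ⟨t, j, rfl⟩

lemma last_descent_unique {t u : List ℤ} {a b : ℕ}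
    (h : t ++ 1 :: List.replicate a (-1) = u ++ 1 :: List.replicate b (-1)) :
    t = u ∧ a = b := by
  induction a generalizing b with
  | zero =>
    rcases b with _ | b
    · simpa using h
    · rw [List.replicate_succ', ← List.cons_append, ← List.append_assoc] at h
      have := (List.append_inj' h rfl).2
      simp at this
  | succ a ih =>
    rcases b with _ | b
    · rw [List.replicate_succ', ← List.cons_append, ← List.append_assoc] at h
      have := (List.append_inj' h rfl).2
      simp at this
    · rw [List.replicate_succ', List.replicate_succ', ← List.cons_append, ← List.append_assoc,
        ← List.cons_append, ← List.append_assoc] at h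
      obtain ⟨h1, h2⟩ := ih (List.append_inj' h rfl).1
      exact ⟨h1, by rw [h2]⟩

lemma sum_le_length (l : List ℤ) (h : ∀ x ∈ l, x = 1 ∨ x = -1) : l.sum ≤ l.length := by
  induction l with
  | nil => simp
  | cons x l ih =>
    have h1 := ih (fun y hy => h y (by simp [hy]))
    have h2 := h x (by simp)
    simp only [List.sum_cons, List.length_cons]
    push_cast
    omega

/-! ### Area and rank -/

lemma area_concat (t : List ℤ) (x : ℤ) : area (t ++ [x]) = area t + (t.sum + x) := by
  unfold area
  rw [List.length_append, List.length_singleton, Finset.sum_range_succ]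
  congr 1
  · refine Finset.sum_congr rfl fun i hi => ?_
    rw [List.take_append_of_le_length (by simpa [Nat.lt_succ_iff] using hi)]
  · rw [List.take_of_length_le (by simp)]
    simp

lemma area_descent (t : List ℤ) (j : ℕ) :
    2 * area (t ++ List.replicate j (-1)) = 2 * area t + 2 * j * t.sum - j * (j + 1) := by
  induction j with
  | zero => simp
  | succ j ih =>
    rw [List.replicate_succ', ← List.append_assoc, area_concat, mul_add, ih]
    simp only [List.sum_append, List.sum_replicate, smul_neg, nsmul_eq_mul, mul_one]
    push_cast
    ring

/-- A peak inserted at height `j` contributes two new points, at heights `j + 1` and `j`. -/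
lemma area_peak (t : List ℤ) (j : ℕ) (h : t.sum = j) :
    area (t ++ 1 :: List.replicate (j + 1) (-1)) =
      area (t ++ List.replicate j (-1)) + (2 * j + 1) := by
  have h1 := area_descent (t ++ [1]) (j + 1)
  have h2 := area_descent t j
  rw [area_concat, List.sum_append, h] at h1
  rw [h] at h2
  simp only [List.append_assoc, List.singleton_append, List.sum_singleton] at h1
  push_cast at h1
  linarith

lemma exists_rank (n : ℕ) : ∀ s : List ℤ, IsDyck s → s.length = 2 * n →
    ∃ r : ℕ, r ≤ n * n ∧ area s = n + 2 * r := by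
  induction n with
  | zero =>
    intro s _ hl
    obtain rfl : s = [] := by simpa using hl
    exact ⟨0, by simp [area]⟩
  | succ n ih =>
    intro s hs hl
    obtain ⟨t, j, rfl⟩ := exists_last_peak hs (by rintro rfl; simp at hl)
    have hp := (isDyck_peak_iff t j).1 hs
    simp only [List.length_append, List.length_cons, List.length_replicate] at hl
    obtain ⟨r, hr, har⟩ := ih _ ((isDyck_descent_iff t j).2 hp) (by simp; omega)
    have hj := sum_le_length t hp.1
    rw [hp.2.2] at hj
    refine ⟨r + j, ?_, ?_⟩
    · have : j ≤ n := by omega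
      nlinarith
    · rw [area_peak t j hp.2.2, har]
      push_cast
      ring

/-- The rank of a path, namely `(area - n) / 2` with `n` half its length; truncation and rounding
do not occur on Dyck paths. -/
def pathRank (s : List ℤ) : ℕ := ((area s - (s.length / 2 : ℕ)) / 2).toNat

lemma area_eq_iff {n : ℕ} {s : List ℤ} (hs : IsDyck s) (hl : s.length = 2 * n) (k : ℕ) :
    area s = (n : ℤ) + 2 * k ↔ pathRank s = k := by
  obtain ⟨r, _, har⟩ := exists_rank n s hs hl
  unfold pathRank
  rw [hl, har]
  omega

lemma pathRank_le {n : ℕ} {s : List ℤ} (hs : IsDyck s) (hl : s.length = 2 * n) :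
    pathRank s ≤ n * n := by
  obtain ⟨r, hr, har⟩ := exists_rank n s hs hl
  rwa [(area_eq_iff hs hl r).1 har]

/-! ### Rank generating functions -/

lemma finite_dyck (n : ℕ) : {s : List ℤ | IsDyck s ∧ s.length = 2 * n}.Finite := by
  refine ((List.finite_length_eq {x : ℤ // x ∈ ({1, -1} : Finset ℤ)} (2 * n)).image
    (List.map Subtype.val)).subset ?_
  rintro s ⟨hs, hl⟩
  have h : ∀ x ∈ s, x ∈ ({1, -1} : Finset ℤ) := fun x hx => by simpa using hs.1 x hx
  lift s to List {x : ℤ // x ∈ ({1, -1} : Finset ℤ)} using h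
  exact ⟨s, by simpa using hl, rfl⟩

/-- The finite set of Dyck paths of semilength `n`. -/
noncomputable def dyckPaths (n : ℕ) : Finset (List ℤ) := (finite_dyck n).toFinset

lemma mem_dyckPaths {n : ℕ} {s : List ℤ} :
    s ∈ dyckPaths n ↔ IsDyck s ∧ s.length = 2 * n := by
  simp [dyckPaths]

open Classical in
/-- The Dyck paths of semilength `n` ending with `U D^(k+1) U D`. -/
noncomputable def endPaths (n k : ℕ) : Finset (List ℤ) :=
  (dyckPaths n).filter (fun s => endsUDkUD s k)

lemma mem_endPaths_def {n k : ℕ} {s : List ℤ} :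
    s ∈ endPaths n k ↔ (IsDyck s ∧ s.length = 2 * n) ∧ endsUDkUD s k := by
  simp [endPaths, mem_dyckPaths]

lemma sum_card_rank (S : Finset (List ℤ)) (N : ℕ) (h : ∀ s ∈ S, pathRank s < N) :
    ∑ i ∈ Finset.range N, Polynomial.C (((S.filter (fun s => pathRank s = i)).card : ℕ) : ℤ) *
      Polynomial.X ^ i = ∑ s ∈ S, (Polynomial.X : Polynomial ℤ) ^ pathRank s := by
  rw [← Finset.sum_fiberwise_of_maps_to (t := Finset.range N) (g := pathRank)
    (fun s hs => Finset.mem_range.2 (h s hs))]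
  refine Finset.sum_congr rfl fun i _ => ?_
  rw [Finset.sum_congr rfl (g := fun _ => (Polynomial.X : Polynomial ℤ) ^ i)
    (fun s hs => by rw [(Finset.mem_filter.1 hs).2])]
  simp

lemma rnk_eq (n k : ℕ) : rnk n k = ((dyckPaths n).filter (fun s => pathRank s = k)).card := by
  unfold rnk
  refine Nat.subtype_card _ fun s => ?_
  rw [Finset.mem_filter, mem_dyckPaths, and_assoc]
  exact and_congr_right fun h1 => and_congr_right fun h2 => (area_eq_iff h1 h2 k).symm

lemma Pnk_eq (n k : ℕ) : Pnk n k = ∑ s ∈ endPaths n k, Polynomial.X ^ pathRank s := by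
  rw [← sum_card_rank _ (n * n + 1)]
  · unfold Pnk
    refine Finset.sum_congr rfl fun i _ => ?_
    congr 3
    refine Nat.subtype_card _ fun s => ?_
    rw [Finset.mem_filter, mem_endPaths_def]
    constructor
    · rintro ⟨⟨⟨h1, h2⟩, h3⟩, h4⟩
      exact ⟨h1, h2, h3, (area_eq_iff h1 h2 i).2 h4⟩
    · rintro ⟨h1, h2, h3, h4⟩
      exact ⟨⟨⟨h1, h2⟩, h3⟩, (area_eq_iff h1 h2 i).1 h4⟩
  · intro s hs
    obtain ⟨h1, h2⟩ := (mem_endPaths_def.1 hs).1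
    exact Nat.lt_succ_of_le (pathRank_le h1 h2)

lemma lhs_eq (n : ℕ) :
    (∑ k ∈ Finset.range (n * n + 2),
      Polynomial.C ((if k = 0 then 0 else (rnk n (k - 1) : ℤ)) - (rnk n k : ℤ)) *
        Polynomial.X ^ k) =
    (Polynomial.X - 1) * ∑ s ∈ dyckPaths n, (Polynomial.X : Polynomial ℤ) ^ pathRank s := by
  have hle : ∀ s ∈ dyckPaths n, pathRank s ≤ n * n := fun s hs =>
    pathRank_le (mem_dyckPaths.1 hs).1 (mem_dyckPaths.1 hs).2
  simp only [Polynomial.C_sub, sub_mul, Finset.sum_sub_distrib, one_mul]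
  congr 1
  · rw [Finset.sum_range_succ', ← sum_card_rank _ (n * n + 1) (fun s hs => by
      have := hle s hs; omega), Finset.mul_sum]
    simp only [Nat.add_eq_zero_iff, one_ne_zero, and_false, if_false, Nat.add_sub_cancel,
      if_true, Polynomial.C_0, zero_mul, add_zero, rnk_eq]
    exact Finset.sum_congr rfl fun i _ => by ring
  · rw [← sum_card_rank _ (n * n + 2) (fun s hs => by have := hle s hs; omega)]
    simp only [rnk_eq]

/-! ### Grouping paths by father -/

/-- The path obtained from `P = f U D` by moving the final peak to height `j` on the last descent
of `f`. -/
def movePeak (P : List ℤ) (j : ℕ) : List ℤ := son (P.take (P.length - 2)) j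

lemma movePeak_eq (t : List ℤ) (k j : ℕ) (hj : j ≤ k + 1) :
    movePeak (t ++ (1 :: (List.replicate (k + 1) (-1) ++ [1, -1]))) j =
      (t ++ 1 :: List.replicate (k + 1 - j) (-1)) ++ 1 :: List.replicate (j + 1) (-1) := by
  obtain ⟨m, hm⟩ := Nat.exists_eq_add_of_le' hj
  have h1 : (t ++ (1 :: (List.replicate (k + 1) (-1) ++ [1, -1]))).take
      ((t ++ (1 :: (List.replicate (k + 1) (-1) ++ [(1 : ℤ), -1]))).length - 2) =
      (t ++ 1 :: List.replicate m (-1)) ++ List.replicate j (-1) := by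
    rw [show t ++ (1 :: (List.replicate (k + 1) (-1) ++ [(1 : ℤ), -1])) =
      ((t ++ 1 :: List.replicate m (-1)) ++ List.replicate j (-1)) ++ [1, -1] by rw [hm]; simp]
    exact List.take_left' (by simp; omega)
  have h2 : ((t ++ 1 :: List.replicate m (-1)) ++ List.replicate j (-1 : ℤ)).length - j =
      (t ++ 1 :: List.replicate m (-1 : ℤ)).length := by
    simp
    omega
  unfold movePeak son
  rw [h1, h2, List.take_left, List.drop_left, hm]
  simp [List.replicate_succ]

/-- A path `t U D^(k+1) U D` of semilength `n` is a Dyck path exactly when its father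
`t U D^(k+1)` is one, i.e. when `t` is a Dyck prefix ending at height `k`. -/
lemma mem_endPaths {n k : ℕ} {P : List ℤ} :
    P ∈ endPaths n k ↔ ∃ t, P = t ++ (1 :: (List.replicate (k + 1) (-1) ++ [1, -1])) ∧
      IsDyckStart t k ∧ t.length + k + 4 = 2 * n := by
  have key : ∀ t : List ℤ, IsDyck (t ++ (1 :: (List.replicate (k + 1) (-1) ++ [1, -1]))) ↔
      IsDyckStart t k := fun t => by
    rw [← isDyck_peak_iff t k]
    have h1 := isDyck_peak_iff (t ++ 1 :: List.replicate (k + 1) (-1)) 0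
    have h2 := isDyck_descent_iff (t ++ 1 :: List.replicate (k + 1) (-1)) 0
    simpa using h1.trans h2.symm
  rw [mem_endPaths_def]
  constructor
  · rintro ⟨⟨h1, h2⟩, t, rfl⟩
    refine ⟨t, rfl, (key t).1 h1, ?_⟩
    simp at h2
    omega
  · rintro ⟨t, rfl, h1, h2⟩
    refine ⟨⟨(key t).2 h1, ?_⟩, t, rfl⟩
    simp
    omega

lemma isDyckStart_cut_descent {t : List ℤ} {k : ℕ} (h : IsDyckStart t k) {j : ℕ} (hj : j ≤ k + 1) :
    IsDyckStart (t ++ 1 :: List.replicate (k + 1 - j) (-1)) j := by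
  have h1 := (isDyck_peak_iff t k).2 h
  obtain ⟨m, hm⟩ := Nat.exists_eq_add_of_le' hj
  rw [← isDyck_descent_iff, hm, Nat.add_sub_cancel]
  rw [hm] at h1
  simpa using h1

lemma pathRank_movePeak {n k : ℕ} {P : List ℤ} (hP : P ∈ endPaths n k) {j : ℕ}
    (hj : j ≤ k + 1) :
    movePeak P j ∈ dyckPaths n ∧ pathRank (movePeak P j) = pathRank P + j := by
  have hD := (mem_endPaths_def.1 hP).1
  obtain ⟨t, rfl, ht, hl⟩ := mem_endPaths.1 hP
  have hpre := isDyckStart_cut_descent ht hj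
  have hpre0 := isDyckStart_cut_descent ht (Nat.zero_le (k + 1))
  have hdy := (isDyck_peak_iff _ j).2 hpre
  have hlen : ((t ++ 1 :: List.replicate (k + 1 - j) (-1)) ++
      1 :: List.replicate (j + 1) (-1 : ℤ)).length = 2 * n := by
    simp
    omega
  rw [movePeak_eq t k j hj]
  refine ⟨mem_dyckPaths.2 ⟨hdy, hlen⟩, ?_⟩
  rw [← area_eq_iff hdy hlen, area_peak _ _ hpre.2.2]
  have h0 := (area_eq_iff hD.1 hD.2 _).2 rfl
  have h1 := area_peak _ _ hpre0.2.2
  have e1 : (t ++ 1 :: List.replicate (k + 1 - 0) (-1)) ++ 1 :: List.replicate (0 + 1) (-1) =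
      t ++ (1 :: (List.replicate (k + 1) (-1) ++ [(1 : ℤ), -1])) := by simp
  have e2 : (t ++ 1 :: List.replicate (k + 1 - j) (-1)) ++ List.replicate j (-1) =
      (t ++ 1 :: List.replicate (k + 1 - 0) (-1)) ++ List.replicate 0 (-1 : ℤ) := by
    obtain ⟨m, hm⟩ := Nat.exists_eq_add_of_le' hj
    rw [hm, Nat.add_sub_cancel]
    simp
  rw [e1, h0] at h1
  rw [e2]
  push_cast at h1 ⊢
  linarith

/-- Every Dyck path of semilength `n` is, for a unique `k` and a unique path ending with
`U D^(k+1) U D`, obtained by moving the final peak to a unique height `j ≤ k + 1`. -/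
lemma sum_dyck_eq (n : ℕ) (hn : 2 ≤ n) :
    ∑ s ∈ dyckPaths n, (Polynomial.X : Polynomial ℤ) ^ pathRank s =
      ∑ k ∈ Finset.range (n - 1), ∑ s ∈ endPaths n k, ∑ j ∈ Finset.range (k + 2),
        Polynomial.X ^ (pathRank s + j) := by
  simp_rw [← Finset.sum_product', Finset.sum_sigma']
  symm
  refine Finset.sum_bij (fun q _ => movePeak q.2.1 q.2.2) ?_ ?_ ?_ ?_
  · rintro ⟨k, P, j⟩ hq
    simp only [Finset.mem_sigma, Finset.mem_product, Finset.mem_range] at hq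
    exact (pathRank_movePeak hq.2.1 (Nat.lt_succ_iff.1 hq.2.2)).1
  · rintro ⟨k, P, j⟩ hq ⟨k', P', j'⟩ hq' heq
    simp only [Finset.mem_sigma, Finset.mem_product, Finset.mem_range] at hq hq' heq
    obtain ⟨t, rfl, -, -⟩ := mem_endPaths.1 hq.2.1
    obtain ⟨t', rfl, -, -⟩ := mem_endPaths.1 hq'.2.1
    rw [movePeak_eq t k j (by omega), movePeak_eq t' k' j' (by omega)] at heq
    obtain ⟨h1, h2⟩ := last_descent_unique heq
    obtain ⟨rfl, h3⟩ := last_descent_unique h1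
    obtain rfl : j = j' := by omega
    obtain rfl : k = k' := by omega
    rfl
  · intro s hs
    obtain ⟨hs1, hs2⟩ := mem_dyckPaths.1 hs
    obtain ⟨u, j, rfl⟩ := exists_last_peak hs1 (by rintro rfl; simp at hs2; omega)
    have hu := (isDyck_peak_iff u j).1 hs1
    have hf := (isDyck_descent_iff u j).2 hu
    simp only [List.length_append, List.length_cons, List.length_replicate] at hs2
    -- The father `u D^j` is nonempty since `n ≥ 2`; its last descent `D^(k+1)` contains `D^j`.
    obtain ⟨t, k, hk⟩ := exists_last_peak hf (by
      intro h
      have := congrArg List.length h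
      simp only [List.length_append, List.length_replicate, List.length_nil] at this
      omega)
    have hex : ∃ m, u = t ++ 1 :: List.replicate m (-1) ∧ m + j = k + 1 := by
      rcases exists_last_descent u hu.1 with ⟨a, rfl⟩ | ⟨v, a, rfl⟩
      · exfalso
        have : (1 : ℤ) ∈ List.replicate a (-1) ++ List.replicate j (-1 : ℤ) := by
          rw [hk]; simp
        simp at this
      · have h : v ++ 1 :: List.replicate (a + j) (-1) =
            t ++ 1 :: List.replicate (k + 1) (-1) := by
          rw [← hk]; simp
        obtain ⟨rfl, h2⟩ := last_descent_unique h
        exact ⟨a, rfl, h2⟩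
    obtain ⟨m, rfl, hm⟩ := hex
    rw [hk] at hf
    have ht := (isDyck_peak_iff t k).1 hf
    have htl := sum_le_length t ht.1
    rw [ht.2.2] at htl
    simp only [List.length_append, List.length_cons, List.length_replicate] at hs2
    refine ⟨⟨k, t ++ (1 :: (List.replicate (k + 1) (-1) ++ [1, -1])), j⟩, ?_, ?_⟩
    · simp only [Finset.mem_sigma, Finset.mem_product, Finset.mem_range]
      exact ⟨by omega, mem_endPaths.2 ⟨t, rfl, ht, by omega⟩, by omega⟩
    · change movePeak _ j = _
      rw [movePeak_eq t k j (by omega), ← hm, Nat.add_sub_cancel]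
  · rintro ⟨k, P, j⟩ hq
    simp only [Finset.mem_sigma, Finset.mem_product, Finset.mem_range] at hq
    rw [(pathRank_movePeak hq.2.1 (Nat.lt_succ_iff.1 hq.2.2)).2]

/-- For `n ≥ 2`,
`Σ_{k≥0} (r_n^{(k−1)} − r_n^{(k)}) x^k = Σ_{k=0}^{n−2} (x^{k+2} − 1) · P_n^{(k)}(x)`
in `ℤ[x]`, with `r_n^{(−1)} = 0` (all ranks are `≤ n(n−1)/2 ≤ n²`, so the range
`0 ≤ k ≤ n² + 1` on the left is exhaustive). -/
theorem s_poly_eq_sum_Pnk (n : ℕ) (hn : 2 ≤ n) :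
    (∑ k ∈ Finset.range (n * n + 2),
      Polynomial.C ((if k = 0 then 0 else (rnk n (k - 1) : ℤ)) - (rnk n k : ℤ)) *
        Polynomial.X ^ k) =
    ∑ k ∈ Finset.range (n - 1), (Polynomial.X ^ (k + 2) - 1) * Pnk n k := by
  rw [lhs_eq, sum_dyck_eq n hn, Finset.mul_sum]
  refine Finset.sum_congr rfl fun k _ => ?_
  rw [Pnk_eq, Finset.mul_sum, Finset.mul_sum]
  refine Finset.sum_congr rfl fun s _ => ?_
  simp_rw [pow_add _ (pathRank s)]
  rw [← Finset.mul_sum, mul_left_comm, mul_geom_sum, mul_comm]
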